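/- arXiv:2104.04400 — 3 statements merged into one kernel-verified Lean document; each statement's English description precedes it below -/
import Mathlib

section
/- Let x̄ ∈ ℝ^n satisfy ∑_i |x̄_i|^p = γ, and let I = {i : x̄_i ≠ 0}. Suppose x ∈ ℝ^n satisfies: (a) x_i = 0 for every i ∉ I; (b) sign(x̄_i)·x_i ≥ 0 for every i ∈ I; and (c) ∑_{i ∈ I} sign(x̄_i)·p·|x̄_i|^{p−1}·(x_i − x̄_i) ≤ 0. Then ∑_i |x_i|^p ≤ γ, i.e., x ∈ B. (In other words, the weighted-ℓ₁ linearized set B^k is contained in the ℓ_p ball B.) -/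
theorem aux_tangent (p a b : ℝ) (hp0 : 0 < p) (hp1 : p < 1) (ha : 0 < a) (hb : 0 ≤ b) :
    b ^ p ≤ a ^ p + p * a ^ (p - 1) * (b - a) := by
  have hs : (-1 : ℝ) ≤ b / a - 1 := by
    have : 0 ≤ b / a := by positivity
    linarith
  have h := rpow_one_add_le_one_add_mul_self hs hp0.le hp1.le
  rw [show 1 + (b / a - 1) = b / a by ring, Real.div_rpow hb ha.le] at h
  have hap : 0 < a ^ p := Real.rpow_pos_of_pos ha p
  rw [div_le_iff₀ hap] at h
  rw [Real.rpow_sub_one ha.ne']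
  refine h.trans (le_of_eq ?_)
  field_simp

/-- the weighted-ℓ₁ linearized set `B^k` (formed at a boundary point `x̄` of the
ℓ_p ball) is contained in the ℓ_p ball. -/
theorem stmt_8 (n : ℕ) (p γ : ℝ) (hp0 : 0 < p) (hp1 : p < 1) (hγ : 0 < γ)
    (xb x : EuclideanSpace ℝ (Fin n))
    (hxb : ∑ i, |xb i| ^ p = γ)
    (ha : ∀ i, xb i = 0 → x i = 0)
    (hb : ∀ i, xb i ≠ 0 → 0 ≤ Real.sign (xb i) * x i)
    (hc : ∑ i ∈ Finset.univ.filter (fun i => xb i ≠ 0),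
        Real.sign (xb i) * (p * |xb i| ^ (p - 1)) * (x i - xb i) ≤ 0) :
    ∑ i, |x i| ^ p ≤ γ := by
  rw [Finset.sum_filter] at hc
  have key : ∀ i, |x i| ^ p ≤ |xb i| ^ p + (if xb i ≠ 0 then
      Real.sign (xb i) * (p * |xb i| ^ (p - 1)) * (x i - xb i) else 0) := by
    intro i
    by_cases h0 : xb i = 0
    · simp [h0, ha i h0]
    · rw [if_pos h0]
      have hbi := hb i h0
      refine (aux_tangent p |xb i| |x i| hp0 hp1 (abs_pos.mpr h0) (abs_nonneg _)).trans
        (le_of_eq ?_)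
      rcases lt_or_gt_of_ne h0 with h | h
      · rw [Real.sign_of_neg h] at hbi ⊢
        rw [abs_of_neg h, abs_of_nonpos (by linarith : x i ≤ 0)]
        ring
      · rw [Real.sign_of_pos h] at hbi ⊢
        rw [abs_of_pos h, abs_of_nonneg (by linarith : 0 ≤ x i)]
        ring
  have hsum := Finset.sum_le_sum (fun i (_ : i ∈ Finset.univ) => key i)
  rw [Finset.sum_add_distrib] at hsum
  linarith
end

section
/- Let f : ℝ^n → ℝ be differentiable, let β > 0, and let x ∈ B satisfy ∑_i |x_i|^p = γ. Set u = x − β·∇f(x), I = {i : x_i ≠ 0}, and let B^x = {y ∈ ℝ^n : y_i = 0 for i ∉ I; sign(x_i)·y_i ≥ 0 for i ∈ I; ∑_{i ∈ I} sign(x_i)·p·|x_i|^{p−1}·(y_i − x_i) ≤ 0}. Then x is first-order stationary for minimizing f over B if and only if x is the minimizer over B^x of y ↦ (1/(2β))·‖y − u‖₂², i.e., ‖x − u‖₂² ≤ ‖y − u‖₂² for all y ∈ B^x. -/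
/-- Feasible directions at `x` have nonnegative slope if `x` is a minimizer. -/
theorem aux_dir (n : ℕ) (β : ℝ) (hβ : 0 < β) (x g a : Fin n → ℝ)
    (H : ∀ y : Fin n → ℝ, (∀ i, x i = 0 → y i = 0) →
      (∀ i, x i ≠ 0 → 0 ≤ Real.sign (x i) * y i) → (∑ i, a i * (y i - x i) ≤ 0) →
      0 ≤ ∑ i, (y i - x i) ^ 2 + 2 * β * ∑ i, g i * (y i - x i))
    (d : Fin n → ℝ) (hd : ∀ i, x i = 0 → d i = 0) (had : ∑ i, a i * d i ≤ 0) :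
    0 ≤ ∑ i, g i * d i := by
  have h1 : ∀ᶠ t : ℝ in nhdsWithin 0 (Set.Ioi 0),
      ∀ i, x i ≠ 0 → 0 ≤ Real.sign (x i) * (x i + t * d i) := by
    rw [Filter.eventually_all]
    intro i
    by_cases hi : x i = 0
    · simp [hi]
    have hpos : 0 < Real.sign (x i) * (x i + 0 * d i) := by
      rw [zero_mul, add_zero]
      exact Real.sign_mul_pos_of_ne_zero _ hi
    have hc : Continuous fun t : ℝ => Real.sign (x i) * (x i + t * d i) := by fun_prop
    have := (hc.tendsto 0).eventually (lt_mem_nhds hpos)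
    filter_upwards [nhdsWithin_le_nhds this] with t ht _
    exact ht.le
  have h2 : ∀ᶠ t : ℝ in nhdsWithin 0 (Set.Ioi 0),
      0 ≤ t * ∑ i, d i ^ 2 + 2 * β * ∑ i, g i * d i := by
    filter_upwards [h1, self_mem_nhdsWithin] with t ht ht0
    have ht0 : 0 < t := ht0
    have := H (fun i => x i + t * d i) (fun i hi => by simp [hi, hd i hi]) ht (by
      have : ∑ i, a i * (x i + t * d i - x i) = t * ∑ i, a i * d i := by
        rw [Finset.mul_sum]; exact Finset.sum_congr rfl fun i _ => by ring
      rw [this]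
      exact mul_nonpos_of_nonneg_of_nonpos ht0.le had)
    have e1 : ∑ i, (x i + t * d i - x i) ^ 2 = t * (t * ∑ i, d i ^ 2) := by
      rw [Finset.mul_sum, Finset.mul_sum]; exact Finset.sum_congr rfl fun i _ => by ring
    have e2 : ∑ i, g i * (x i + t * d i - x i) = t * ∑ i, g i * d i := by
      rw [Finset.mul_sum]; exact Finset.sum_congr rfl fun i _ => by ring
    rw [e1, e2] at this
    refine nonneg_of_mul_nonneg_right (b := _) (a := t) ?_ ht0
    linarith
  have h3 : Filter.Tendsto (fun t : ℝ => t * ∑ i, d i ^ 2 + 2 * β * ∑ i, g i * d i)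
      (nhdsWithin 0 (Set.Ioi 0)) (nhds (0 * ∑ i, d i ^ 2 + 2 * β * ∑ i, g i * d i)) := by
    have hc : Continuous fun t : ℝ => t * ∑ i, d i ^ 2 + 2 * β * ∑ i, g i * d i := by fun_prop
    exact (hc.tendsto 0).mono_left nhdsWithin_le_nhds
  have h4 := ge_of_tendsto h3 h2
  rw [zero_mul, zero_add] at h4
  exact nonneg_of_mul_nonneg_right h4 (by positivity)

/-- Existence of the multiplier. -/
theorem aux_mult (n : ℕ) (x g a : Fin n → ℝ) (ha : ∀ i, x i = 0 → a i = 0)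
    (H : ∀ d : Fin n → ℝ, (∀ i, x i = 0 → d i = 0) → ∑ i, a i * d i ≤ 0 →
      0 ≤ ∑ i, g i * d i) :
    ∃ ξ : ℝ, 0 ≤ ξ ∧ ∀ i, x i ≠ 0 → g i + ξ * a i = 0 := by
  have hA : 0 ≤ ∑ i, a i ^ 2 := Finset.sum_nonneg fun i _ => sq_nonneg _
  have hga : ∑ i, g i * a i ≤ 0 := by
    have := H (fun i => - a i) (fun i hi => by simp [ha i hi]) (by
      have : ∑ i, a i * (- a i) = - ∑ i, a i ^ 2 := by
        rw [← Finset.sum_neg_distrib]; exact Finset.sum_congr rfl fun i _ => by ring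
      linarith)
    simpa using this
  obtain ⟨l, hl, hlA⟩ : ∃ l : ℝ, l ≤ 0 ∧ l * ∑ i, a i ^ 2 = ∑ i, g i * a i := by
    rcases hA.eq_or_lt with h0 | h0
    · refine ⟨0, le_rfl, ?_⟩
      have h := (Finset.sum_eq_zero_iff_of_nonneg (fun i _ => sq_nonneg (a i))).1 h0.symm
      rw [zero_mul, eq_comm]
      refine Finset.sum_eq_zero fun i hi => ?_
      rw [pow_eq_zero_iff two_ne_zero |>.1 (h i hi), mul_zero]
    · exact ⟨_, div_nonpos_of_nonpos_of_nonneg hga hA, div_mul_cancel₀ _ h0.ne'⟩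
  let d : Fin n → ℝ := fun i => if x i = 0 then 0 else l * a i - g i
  have had : ∑ i, a i * d i = 0 := by
    have : ∑ i, a i * d i = l * ∑ i, a i ^ 2 - ∑ i, g i * a i := by
      rw [Finset.mul_sum, ← Finset.sum_sub_distrib]
      refine Finset.sum_congr rfl fun i _ => ?_
      by_cases hi : x i = 0
      · simp [ha i hi]
      · simp only [d, hi, if_false]; ring
    linarith
  have hgd := H d (fun i hi => by simp [d, hi]) had.le
  have hdd : ∑ i, d i ^ 2 = l * ∑ i, a i * d i - ∑ i, g i * d i := by
    rw [Finset.mul_sum, ← Finset.sum_sub_distrib]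
    refine Finset.sum_congr rfl fun i _ => ?_
    by_cases hi : x i = 0
    · simp [d, hi]
    · simp only [d, hi, if_false]; ring
  have hz : ∑ i, d i ^ 2 = 0 := by
    apply le_antisymm
    · rw [hdd, had]; linarith
    · exact Finset.sum_nonneg fun i _ => sq_nonneg _
  have h := (Finset.sum_eq_zero_iff_of_nonneg (fun i _ => sq_nonneg (d i))).1 hz
  refine ⟨-l, by linarith, fun i hi => ?_⟩
  have := pow_eq_zero_iff two_ne_zero |>.1 (h i (Finset.mem_univ i))
  simp only [d, hi, if_false] at this
  linarith

/-- for a boundary point `x` of the ℓ_p ball, `x` is first-order stationary for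
minimizing `f` over the ℓ_p ball iff `x` minimizes `y ↦ (1/(2β))‖y - u‖²` (with
`u = x - β ∇f(x)`) over the weighted-ℓ₁ linearized set `B^x`. -/
theorem stmt_10 (n : ℕ) (p γ : ℝ) (hp0 : 0 < p) (hp1 : p < 1) (hγ : 0 < γ)
    (β : ℝ) (hβ : 0 < β)
    (f : EuclideanSpace ℝ (Fin n) → ℝ) (hf : Differentiable ℝ f)
    (x : EuclideanSpace ℝ (Fin n)) (hx : ∑ i, |x i| ^ p = γ)
    (u : EuclideanSpace ℝ (Fin n)) (hu : u = x - β • gradient f x) :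
    ((gradient f x = 0 ∧ ∑ i, |x i| ^ p < γ) ∨
      ((∑ i, |x i| ^ p = γ) ∧ ∃ ξ : ℝ, 0 ≤ ξ ∧ ∀ i, x i ≠ 0 →
        gradient f x i + ξ * p * |x i| ^ (p - 1) * Real.sign (x i) = 0))
    ↔
    (∀ y : EuclideanSpace ℝ (Fin n),
      (∀ i, x i = 0 → y i = 0) →
      (∀ i, x i ≠ 0 → 0 ≤ Real.sign (x i) * y i) →
      (∑ i ∈ Finset.univ.filter (fun i => x i ≠ 0),
        Real.sign (x i) * (p * |x i| ^ (p - 1)) * (y i - x i)) ≤ 0 →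
      1 / (2 * β) * ‖x - u‖ ^ 2 ≤ 1 / (2 * β) * ‖y - u‖ ^ 2) := by
  set g := gradient f x with hg
  have key : ∀ y : EuclideanSpace ℝ (Fin n),
      (1 / (2 * β) * ‖x - u‖ ^ 2 ≤ 1 / (2 * β) * ‖y - u‖ ^ 2) ↔
        0 ≤ ∑ i, (y i - x i) ^ 2 + 2 * β * ∑ i, g i * (y i - x i) := by
    intro y
    rw [mul_le_mul_iff_right₀ (by positivity), ← sub_nonneg]
    have : ‖y - u‖ ^ 2 - ‖x - u‖ ^ 2 =
        ∑ i, (y i - x i) ^ 2 + 2 * β * ∑ i, g i * (y i - x i) := by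
      rw [EuclideanSpace.real_norm_sq_eq, EuclideanSpace.real_norm_sq_eq,
        ← Finset.sum_sub_distrib, Finset.mul_sum, ← Finset.sum_add_distrib]
      refine Finset.sum_congr rfl fun i _ => ?_
      simp only [hu, PiLp.sub_apply, PiLp.smul_apply, smul_eq_mul]
      ring
    rw [this]
  set a : Fin n → ℝ := fun i => Real.sign (x i) * (p * |x i| ^ (p - 1)) with ha
  have ha0 : ∀ i, x i = 0 → a i = 0 := fun i hi => by simp [ha, hi]
  have hsum : ∀ y : EuclideanSpace ℝ (Fin n),
      (∑ i ∈ Finset.univ.filter (fun i => x i ≠ 0),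
        Real.sign (x i) * (p * |x i| ^ (p - 1)) * (y i - x i)) =
      ∑ i, a i * (y i - x i) := by
    intro y
    refine Finset.sum_subset (Finset.filter_subset _ _) fun i _ hi => ?_
    have : x i = 0 := by simpa using hi
    simp [this]
  constructor
  · rintro (⟨_, h⟩ | ⟨_, ξ, hξ, h⟩)
    · exact absurd hx h.ne
    intro y hy0 _ hy
    rw [hsum] at hy
    rw [key]
    have : ∑ i, g i * (y i - x i) = - (ξ * ∑ i, a i * (y i - x i)) := by
      rw [Finset.mul_sum, ← Finset.sum_neg_distrib]
      refine Finset.sum_congr rfl fun i _ => ?_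
      by_cases hi : x i = 0
      · simp [hi, hy0 i hi]
      · have := h i hi
        have e : g i = - (ξ * a i) := by simp only [ha]; linarith
        rw [e]; ring
    rw [this]
    have h1 : 0 ≤ - (ξ * ∑ i, a i * (y i - x i)) := by
      have := mul_nonpos_of_nonneg_of_nonpos hξ hy
      linarith
    have h2 : 0 ≤ ∑ i, (y i - x i) ^ 2 := Finset.sum_nonneg fun i _ => sq_nonneg _
    positivity
  · intro H
    refine Or.inr ⟨hx, ?_⟩
    obtain ⟨ξ, hξ, h⟩ := aux_mult n (fun i => x i) (fun i => g i) a ha0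
      (aux_dir n β hβ (fun i => x i) (fun i => g i) a (fun y h1 h2 h3 => by
        have := H (WithLp.toLp 2 y) h1 h2 (by rw [hsum]; exact h3)
        rw [key] at this
        exact this))
    refine ⟨ξ, hξ, fun i hi => ?_⟩
    have := h i hi
    simp only [ha] at this
    linarith
end

section
/- Let C ⊆ ℝ^n be a nonempty closed convex set, let f : ℝ^n → ℝ be differentiable with L-Lipschitz gradient (L > 0), let β ∈ (0, 1/L], let x ∈ C, set u = x − β·∇f(x) and P(y) = (1/(2β))·‖y − u‖₂², and let x⁺ be the minimizer of P over C. Then f(x⁺) ≤ f(x) − (P(x) − P(x⁺)); in particular f(x⁺) ≤ f(x). -/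
theorem descent_aux {E : Type*} [NormedAddCommGroup E] [InnerProductSpace ℝ E] [CompleteSpace E]
    (f : E → ℝ) (hf : Differentiable ℝ f) (L : ℝ)
    (hlip : ∀ y z : E, ‖gradient f y - gradient f z‖ ≤ L * ‖y - z‖) (x d : E) :
    f (x + d) ≤ f x + inner ℝ (gradient f x) d + L / 2 * ‖d‖ ^ 2 := by
  have hder : ∀ t : ℝ, HasDerivAt
      (fun t : ℝ => f (x + t • d) - t * inner ℝ (gradient f x) d - L / 2 * ‖d‖ ^ 2 * t ^ 2)
      (inner ℝ (gradient f (x + t • d)) d - inner ℝ (gradient f x) d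
        - L * ‖d‖ ^ 2 * t) t := by
    intro t
    have h1 : HasDerivAt (fun t : ℝ => x + t • d) d t := by
      simpa using ((hasDerivAt_id t).smul_const d).const_add x
    have h2 := (hf (x + t • d)).hasGradientAt.hasFDerivAt.comp_hasDerivAt t h1
    have h3 := (hasDerivAt_id t).mul_const (inner ℝ (gradient f x) d)
    have h4 := (hasDerivAt_pow 2 t).const_mul (L / 2 * ‖d‖ ^ 2)
    have h5 := (h2.sub h3).sub h4
    refine h5.congr_deriv ?_
    simp
    ring
  have hanti := antitoneOn_of_deriv_nonpos (convex_Icc (0 : ℝ) 1)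
    (fun t _ => (hder t).continuousAt.continuousWithinAt)
    (fun t _ => (hder t).differentiableAt.differentiableWithinAt)
    (by
      intro t ht
      rw [interior_Icc] at ht
      rw [(hder t).deriv, ← inner_sub_left]
      have h1 := real_inner_le_norm (gradient f (x + t • d) - gradient f x) d
      have h2 := hlip (x + t • d) x
      rw [add_sub_cancel_left, norm_smul, Real.norm_of_nonneg ht.1.le] at h2
      have h3 := mul_le_mul_of_nonneg_right h2 (norm_nonneg d)
      nlinarith)
  have h := hanti (Set.left_mem_Icc.2 zero_le_one) (Set.right_mem_Icc.2 zero_le_one) zero_le_one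
  simp at h ⊢
  linarith

/-- with stepsize `β ∈ (0, 1/L]`, the gradient projection step onto a nonempty
closed convex set `C` satisfies `f(x⁺) ≤ f(x) - (P(x) - P(x⁺))`, and in particular
`f(x⁺) ≤ f(x)`. -/
theorem stmt_14 (n : ℕ) (C : Set (EuclideanSpace ℝ (Fin n)))
    (hCne : C.Nonempty) (hCcl : IsClosed C) (hCcv : Convex ℝ C)
    (f : EuclideanSpace ℝ (Fin n) → ℝ) (hf : Differentiable ℝ f)
    (L : ℝ) (hL : 0 < L)
    (hlip : ∀ y z : EuclideanSpace ℝ (Fin n),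
      ‖gradient f y - gradient f z‖ ≤ L * ‖y - z‖)
    (β : ℝ) (hβ0 : 0 < β) (hβL : β ≤ 1 / L)
    (x : EuclideanSpace ℝ (Fin n)) (hxC : x ∈ C)
    (u : EuclideanSpace ℝ (Fin n)) (hu : u = x - β • gradient f x)
    (P : EuclideanSpace ℝ (Fin n) → ℝ) (hP : ∀ y, P y = 1 / (2 * β) * ‖y - u‖ ^ 2)
    (xp : EuclideanSpace ℝ (Fin n)) (hxpC : xp ∈ C)
    (hxpmin : ∀ y ∈ C, P xp ≤ P y) :
    f xp ≤ f x - (P x - P xp) ∧ f xp ≤ f x := by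
  have hd := descent_aux f hf L hlip x (xp - x)
  rw [add_sub_cancel] at hd
  have hkey : P xp - P x = 1 / (2 * β) * ‖xp - x‖ ^ 2 + inner ℝ (gradient f x) (xp - x) := by
    rw [hP, hP, hu]
    have e1 : xp - (x - β • gradient f x) = (xp - x) + β • gradient f x := by abel
    have e2 : x - (x - β • gradient f x) = β • gradient f x := by abel
    rw [e1, e2, norm_add_sq_real, real_inner_smul_right, real_inner_comm]
    field_simp
    ring
  have hLβ : L / 2 ≤ 1 / (2 * β) := by
    rw [le_div_iff₀ hL] at hβL
    rw [div_le_div_iff₀ (by norm_num) (by positivity)]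
    nlinarith
  have h1 := mul_le_mul_of_nonneg_right hLβ (sq_nonneg ‖xp - x‖)
  have h2 := hxpmin x hxC
  constructor <;> linarith
end
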